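/- For all M, A, P, d > 0 there exist T', C₁, C₂ > 0, depending only on M, A, P and d, with the following property. Let Ω ⊆ ℝ be an open interval, T > 0, let a : ℝ × ℝ × Ω × [0,T] → ℝ be continuous and positive with a(p,q,x,t)·p² ≥ A whenever |p| ≥ P, and let u : Ω × [0,T] → ℝ have continuous partial derivatives u_t, u_x, u_{xx} on Ω × (0,T] and satisfy u_t = a(u_x,u,x,t)·u_{xx} there, with oscillation of u over Ω × [0,T] at most M. Then for every x ∈ Ω whose distance to the complement of Ω is at least d, and every t ∈ (0, min(T,T')]: |u_x(x,t)| ≤ C₁·√t·(1+t)·exp(C₂/t). -/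

import Mathlib

/-!
A two-point maximum principle. For `k > 0` the profile `E (w, τ) = exp (k (w - A k) / τ)` satisfies
`∂_τ E ≤ A ∂_w² E` for `w ≥ 0`, and so does the barrier `B (w, τ) = E (w, τ) - E (0, τ)`, strictly.
Compare `B (u (y, t) - u (x, t), t - t₀)` with `(y - x) + ((x - x₀)² + (y - x₀)²) / (4 r)` for
`x ≤ y` in `[x₀ - r, x₀ + r]`. At a positive maximum of the difference both spatial slopes of `u`
are large, because `∂_w B` is small there, so `b u_x² ≥ A` turns the second order condition into
`∂_w B u_t ≤ - A ∂_w² B / 2` at `y`, and symmetrically at `x`; this contradicts the inequality for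
`∂_τ B`. Since the oscillation of `u` is less than `A k`, the profile vanishes to infinite order as
`τ → 0`, which makes the comparison true near `t = t₀` whatever the gradient of `u` is.
Differentiating the comparison at `x = y = x₀` bounds `u_x` by `1 / ∂_w B (0, τ)`.
-/

open Set Filter Topology Metric
open scoped NNReal

section Calculus

theorem mul_nonpos_of_isMaxOn_of_segment_subset {f : ℝ → ℝ} {c a b : ℝ} {S : Set ℝ}
    (hmax : IsMaxOn f S a) (hf : HasDerivWithinAt f c S a) (hab : segment ℝ a b ⊆ S) :
    (b - a) * c ≤ 0 := by
  simpa using hmax.localize.hasFDerivWithinAt_nonpos hf.hasFDerivWithinAt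
    (sub_mem_posTangentConeAt_of_segment_subset hab)

theorem second_deriv_nonpos_of_isLocalMax {f f' : ℝ → ℝ} {c z : ℝ} (hmax : IsLocalMax f z)
    (hf : ∀ᶠ y in 𝓝 z, HasDerivAt f (f' y) y) (hf' : HasDerivAt f' c z) : c ≤ 0 := by
  have hderiv : deriv f =ᶠ[𝓝 z] f' := hf.mono fun y hy => hy.deriv
  have hc : deriv (deriv f) z = c := hderiv.deriv_eq.trans hf'.deriv
  by_contra! hpos
  have hmin : IsLocalMin f z := isLocalMin_of_deriv_deriv_pos (hc ▸ hpos) hmax.deriv_eq_zero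
    hf.self_of_nhds.continuousAt
  have hconst : f =ᶠ[𝓝 z] fun _ => f z := by
    filter_upwards [hmax, hmin] with y h₁ h₂ using le_antisymm h₁ h₂
  have hzero : deriv (deriv f) z = 0 := by rw [hconst.deriv.deriv_eq]; simp
  exact hpos.ne' (hc.symm.trans hzero)

theorem first_second_order_conditions_of_isLocalMax_comp_sub {Φ Φ' v v' q q' : ℝ → ℝ}
    {Φ'' v'' q'' z : ℝ} (hΦ : ∀ᶠ w in 𝓝 (v z), HasDerivAt Φ (Φ' w) w)
    (hΦ' : HasDerivAt Φ' Φ'' (v z)) (hv : ∀ᶠ y in 𝓝 z, HasDerivAt v (v' y) y)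
    (hv' : HasDerivAt v' v'' z) (hq : ∀ᶠ y in 𝓝 z, HasDerivAt q (q' y) y)
    (hq' : HasDerivAt q' q'' z) (hmax : IsLocalMax (fun y => Φ (v y) - q y) z) :
    Φ' (v z) * v' z = q' z ∧ Φ'' * v' z ^ 2 + Φ' (v z) * v'' ≤ q'' := by
  have hderiv : ∀ᶠ y in 𝓝 z,
      HasDerivAt (fun y => Φ (v y) - q y) (Φ' (v y) * v' y - q' y) y := by
    filter_upwards [hv.self_of_nhds.continuousAt.eventually hΦ, hv, hq] with y h₁ h₂ h₃
    exact (h₁.comp y h₂).sub h₃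
  have hderiv' := ((hΦ'.comp z hv.self_of_nhds).mul hv').sub hq'
  have h₁ := hmax.hasDerivAt_eq_zero hderiv.self_of_nhds
  have h₂ := second_deriv_nonpos_of_isLocalMax hmax hderiv hderiv'
  simp only [Function.comp_apply] at h₂
  exact ⟨by linarith, by linarith⟩

theorem tendsto_inv_pow_mul_exp_neg_div_nhdsGT_zero {c : ℝ} (hc : 0 < c) (n : ℕ) :
    Tendsto (fun τ : ℝ => τ⁻¹ ^ n * Real.exp (-(c / τ))) (𝓝[>] 0) (𝓝 0) := by
  have hlim := ((Real.tendsto_pow_mul_exp_neg_atTop_nhds_zero n).comp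
    (tendsto_inv_nhdsGT_zero.const_mul_atTop hc)).const_mul (c⁻¹ ^ n)
  rw [mul_zero] at hlim
  refine hlim.congr fun τ => ?_
  simp only [Function.comp_apply, mul_pow, div_eq_mul_inv]
  rw [← mul_assoc, ← mul_assoc, ← mul_pow, inv_mul_cancel₀ hc.ne', one_pow, one_mul]

/-- Applied with `α = ∂_w B`, `β = ∂_w² B`, `p = u_x`, `q = u_xx`: the convexity of the barrier
absorbs the curvature `c` of the comparison function. -/
theorem mul_mul_le_of_coercive {A b p q α β c : ℝ} (hA : 0 < A) (hβ : 0 ≤ β)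
    (hcoercive : A ≤ b * p ^ 2) (hsecond : β * p ^ 2 + α * q ≤ c) (hconvex : 2 * c ≤ β * p ^ 2) :
    b * (α * q) ≤ -(A / 2 * β) := by
  have hb : 0 < b := pos_of_mul_pos_left (hA.trans_le hcoercive) (sq_nonneg p)
  calc b * (α * q) ≤ b * -(β * p ^ 2 / 2) := by gcongr; linarith
    _ = -(b * p ^ 2 / 2 * β) := by ring
    _ ≤ -(A / 2 * β) := by gcongr

theorem half_le_abs_add_div_of_mem_ball {σ x x₀ r : ℝ} (hσ : |σ| = 1) (hx : x ∈ ball x₀ r) :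
    1 / 2 ≤ |σ + (x - x₀) / (2 * r)| := by
  have hr : 0 < r := pos_of_mem_ball hx
  have hdist : |(x - x₀) / (2 * r)| ≤ 1 / 2 := by
    rw [abs_div, abs_of_pos (by positivity : 0 < 2 * r), div_le_iff₀ (by positivity)]
    have := (mem_ball_iff_norm.1 hx).le
    rw [Real.norm_eq_abs] at this
    linarith
  have := abs_sub_abs_le_abs_sub σ (-((x - x₀) / (2 * r)))
  rw [abs_neg, sub_neg_eq_add] at this
  linarith

end Calculus

section Barrier

/-- The exponential profile `E (w, τ) = exp (k (w - A k) / τ)`, whose `w`-derivatives are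
`k / τ * E` and `(k / τ) ^ 2 * E`; the shift `A k` is what makes `∂_τ E ≤ A ∂_w² E` for `w ≥ 0`. -/
noncomputable def expProfile (A k w τ : ℝ) : ℝ :=
  Real.exp (k * (w - A * k) / τ)

/-- The barrier of the two-point maximum principle: the profile normalised to vanish at `w = 0`. -/
noncomputable def expBarrier (A k w τ : ℝ) : ℝ :=
  expProfile A k w τ - expProfile A k 0 τ

variable {A k w τ : ℝ}

theorem expProfile_pos (A k w τ : ℝ) : 0 < expProfile A k w τ :=
  Real.exp_pos _

theorem expProfile_le_expProfile {w₁ w₂ : ℝ} (hk : 0 ≤ k) (hτ : 0 ≤ τ) (hw : w₁ ≤ w₂) :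
    expProfile A k w₁ τ ≤ expProfile A k w₂ τ := by
  unfold expProfile
  gcongr

theorem hasDerivAt_expProfile (A k w τ : ℝ) :
    HasDerivAt (fun w => expProfile A k w τ) (k / τ * expProfile A k w τ) w :=
  ((((hasDerivAt_id w).sub_const (A * k)).const_mul k).div_const τ).exp.congr_deriv (by
    simp only [expProfile, id]
    ring)

theorem hasDerivWithinAt_expProfile_time {v : ℝ → ℝ} {v' t₀ t : ℝ} {J : Set ℝ}
    (hv : HasDerivWithinAt v v' J t) (ht : t - t₀ ≠ 0) :
    HasDerivWithinAt (fun t => expProfile A k (v t) (t - t₀))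
      (k / (t - t₀) * expProfile A k (v t) (t - t₀) * v' -
        k * (v t - A * k) / (t - t₀) ^ 2 * expProfile A k (v t) (t - t₀)) J t :=
  (((hv.sub_const (A * k)).const_mul k).div
    ((hasDerivWithinAt_id t J).sub_const t₀) ht).exp.congr_deriv (by
      simp only [expProfile, id, Pi.div_apply]
      field_simp)

theorem expBarrier_nonpos (hk : 0 ≤ k) (hτ : 0 ≤ τ) (hw : w ≤ 0) : expBarrier A k w τ ≤ 0 :=
  sub_nonpos.2 (expProfile_le_expProfile hk hτ hw)

theorem expBarrier_lt_expProfile (A k w τ : ℝ) : expBarrier A k w τ < expProfile A k w τ :=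
  sub_lt_self _ (expProfile_pos A k 0 τ)

theorem expBarrier_le_deriv_mul (A k w τ : ℝ) :
    expBarrier A k w τ ≤ k / τ * expProfile A k w τ * w := by
  have hfactor : expProfile A k 0 τ = expProfile A k w τ * Real.exp (-(k / τ * w)) := by
    rw [expProfile, expProfile, ← Real.exp_add]
    congr 1
    ring
  have htangent := mul_le_mul_of_nonneg_left (Real.add_one_le_exp (-(k / τ * w)))
    (expProfile_pos A k w τ).le
  rw [expBarrier, hfactor]
  linarith

/-- `∂_τ B < A ∂_w² B` for the barrier `B`. -/
theorem expBarrier_strict_subsolution (hA : 0 < A) (hk : 0 < k) (hτ : τ ≠ 0) (hw : 0 ≤ w) :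
    -(k * (w - A * k) / τ ^ 2 * expProfile A k w τ) -
        -(k * (0 - A * k) / τ ^ 2 * expProfile A k 0 τ) <
      A * ((k / τ) ^ 2 * expProfile A k w τ) := by
  have hE := expProfile_pos A k w τ
  have hF := expProfile_pos A k 0 τ
  have hdrop : 0 ≤ k * w / τ ^ 2 * expProfile A k w τ := by positivity
  have hstrict : 0 < A * k ^ 2 / τ ^ 2 * expProfile A k 0 τ := by positivity
  linear_combination hdrop + hstrict

theorem tendsto_inv_pow_mul_expProfile (n : ℕ) (hk : 0 < k) (hw : w < A * k) :
    Tendsto (fun τ => τ⁻¹ ^ n * expProfile A k w τ) (𝓝[>] 0) (𝓝 0) :=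
  (tendsto_inv_pow_mul_exp_neg_div_nhdsGT_zero (mul_pos hk (sub_pos.2 hw)) n).congr fun τ => by
    rw [expProfile]
    congr 2
    ring

theorem eventually_deriv_expProfile_mul_le_one (c : ℝ) (hk : 0 < k) (hw : w < A * k) :
    ∀ᶠ τ in 𝓝[>] 0, k / τ * expProfile A k w τ * c ≤ 1 := by
  have hlim := (tendsto_inv_pow_mul_expProfile 1 hk hw).const_mul (k * c)
  rw [mul_zero] at hlim
  filter_upwards [hlim.eventually (ge_mem_nhds one_pos)] with τ hτ
  exact le_of_eq_of_le (by ring) hτ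

theorem expProfile_sub_quadratic_conditions_of_isLocalMax {v v' : ℝ → ℝ} {v'' c σ x₀ r z : ℝ}
    (hr : r ≠ 0) (hv : ∀ᶠ y in 𝓝 z, HasDerivAt v (v' y) y) (hv' : HasDerivAt v' v'' z)
    (hmax : IsLocalMax
      (fun y => expProfile A k (v y + c) τ - (σ * y + (y - x₀) ^ 2 / (4 * r))) z) :
    k / τ * expProfile A k (v z + c) τ * v' z = σ + (z - x₀) / (2 * r) ∧
      k / τ * (k / τ * expProfile A k (v z + c) τ) * v' z ^ 2 +
        k / τ * expProfile A k (v z + c) τ * v'' ≤ 1 / (2 * r) := by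
  have hquad : ∀ y, HasDerivAt (fun y => σ * y + (y - x₀) ^ 2 / (4 * r))
      (σ + (y - x₀) / (2 * r)) y := fun y =>
    (((hasDerivAt_id y).const_mul σ).add
      ((((hasDerivAt_id y).sub_const x₀).pow 2).div_const (4 * r))).congr_deriv (by
        simp only [id]
        field_simp
        ring)
  have hquad' : HasDerivAt (fun y => σ + (y - x₀) / (2 * r)) (1 / (2 * r)) z :=
    (((hasDerivAt_id z).sub_const x₀).div_const (2 * r)).const_add σ
  exact first_second_order_conditions_of_isLocalMax_comp_sub
    (Φ := fun w => expProfile A k (w + c) τ)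
    (.of_forall fun w => (hasDerivAt_expProfile A k (w + c) τ).comp_add_const w c)
    (((hasDerivAt_expProfile A k (v z + c) τ).comp_add_const (v z) c).const_mul (k / τ))
    hv hv' (.of_forall hquad) hquad' hmax

/-- The smallness of the profile which forces, at a positive maximum in an interval of radius `r`, a
slope of `u` of size at least `P` and enough convexity of the barrier. -/
structure IsSmallProfile (A k P r w τ : ℝ) : Prop where
  profile_le : expProfile A k w τ ≤ r / 4
  deriv_le : k / τ * expProfile A k w τ * (2 * P) ≤ 1

theorem IsSmallProfile.mono {P r w' : ℝ} (h : IsSmallProfile A k P r w' τ) (hk : 0 ≤ k)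
    (hτ : 0 ≤ τ) (hP : 0 ≤ P) (hw : w ≤ w') : IsSmallProfile A k P r w τ where
  profile_le := (expProfile_le_expProfile hk hτ hw).trans h.profile_le
  deriv_le := by
    refine le_trans ?_ h.deriv_le
    have := expProfile_le_expProfile (A := A) hk hτ hw
    gcongr

theorem eventually_isSmallProfile (P : ℝ) {r : ℝ} (hr : 0 < r) (hk : 0 < k) (hw : w < A * k) :
    ∀ᶠ τ in 𝓝[>] 0, IsSmallProfile A k P r w τ := by
  have hlim : Tendsto (expProfile A k w) (𝓝[>] 0) (𝓝 0) := by
    simpa using tendsto_inv_pow_mul_expProfile 0 hk hw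
  filter_upwards [hlim.eventually (ge_mem_nhds (by positivity : 0 < r / 4)),
    eventually_deriv_expProfile_mul_le_one (2 * P) hk hw] with τ h₁ h₂ using ⟨h₁, h₂⟩

end Barrier

section TwoPointGap

/-- The amount by which `B (u (y, t) - u (x, t), t - t₀)`, for the barrier `B`, exceeds the
comparison function `(y - x) + ((x - x₀)² + (y - x₀)²) / (4 r)`. -/
noncomputable def twoPointGap (A k r x₀ t₀ : ℝ) (u : ℝ → ℝ → ℝ) (x y t : ℝ) : ℝ :=
  expBarrier A k (u y t - u x t) (t - t₀) - (y - x + ((x - x₀) ^ 2 + (y - x₀) ^ 2) / (4 * r))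

variable {A k r x₀ t₀ x y t : ℝ} {u : ℝ → ℝ → ℝ}

theorem continuousOn_twoPointGap {I J : Set ℝ}
    (hu : ContinuousOn (fun z : ℝ × ℝ => u z.1 z.2) (I ×ˢ J)) (hJ : ∀ t ∈ J, t ≠ t₀) :
    ContinuousOn (fun z : ℝ × ℝ × ℝ => twoPointGap A k r x₀ t₀ u z.1 z.2.1 z.2.2)
      (I ×ˢ I ×ˢ J) := by
  have hτ : ∀ z ∈ I ×ˢ I ×ˢ J, z.2.2 - t₀ ≠ 0 := fun z hz => sub_ne_zero.2 (hJ _ hz.2.2)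
  have hux : ContinuousOn (fun z : ℝ × ℝ × ℝ => u z.1 z.2.2) (I ×ˢ I ×ˢ J) :=
    hu.comp (f := fun z : ℝ × ℝ × ℝ => (z.1, z.2.2)) (by fun_prop) fun z hz => ⟨hz.1, hz.2.2⟩
  have huy : ContinuousOn (fun z : ℝ × ℝ × ℝ => u z.2.1 z.2.2) (I ×ˢ I ×ˢ J) :=
    hu.comp (f := fun z : ℝ × ℝ × ℝ => (z.2.1, z.2.2)) (by fun_prop) fun z hz => hz.2
  have hτc : ContinuousOn (fun z : ℝ × ℝ × ℝ => z.2.2 - t₀) (I ×ˢ I ×ˢ J) := by fun_prop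
  have hE : ∀ v : ℝ × ℝ × ℝ → ℝ, ContinuousOn v (I ×ˢ I ×ˢ J) →
      ContinuousOn (fun z => expProfile A k (v z) (z.2.2 - t₀)) (I ×ˢ I ×ˢ J) := fun v hv =>
    ((continuousOn_const.mul (hv.sub continuousOn_const)).div hτc hτ).rexp
  exact ((hE _ (huy.sub hux)).sub (hE _ continuousOn_const)).sub (by fun_prop)

theorem exists_forall_twoPointGap_le {I J : Set ℝ} (hI : IsCompact I) (hJ : IsCompact J)
    (hu : ContinuousOn (fun z : ℝ × ℝ => u z.1 z.2) (I ×ˢ J)) (ht₀ : ∀ t ∈ J, t ≠ t₀)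
    (hInonempty : I.Nonempty) (hJnonempty : J.Nonempty) :
    ∃ x₁ ∈ I, ∃ y₁ ∈ I, ∃ t₁ ∈ J, x₁ ≤ y₁ ∧ ∀ x ∈ I, ∀ y ∈ I, ∀ t ∈ J, x ≤ y →
      twoPointGap A k r x₀ t₀ u x y t ≤ twoPointGap A k r x₀ t₀ u x₁ y₁ t₁ := by
  have hcompact : IsCompact ((I ×ˢ I ×ˢ J) ∩ {z : ℝ × ℝ × ℝ | z.1 ≤ z.2.1}) :=
    (hI.prod (hI.prod hJ)).inter_right (isClosed_le continuous_fst (by fun_prop))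
  obtain ⟨x, hx⟩ := hInonempty
  obtain ⟨t, ht⟩ := hJnonempty
  obtain ⟨⟨x₁, y₁, t₁⟩, ⟨⟨hx₁, hy₁, ht₁⟩, hle⟩, hmax⟩ :=
    hcompact.exists_isMaxOn ⟨(x, x, t), ⟨hx, hx, ht⟩, le_refl x⟩
      ((continuousOn_twoPointGap (A := A) (k := k) (r := r) (x₀ := x₀) hu ht₀).mono
        inter_subset_left)
  exact ⟨x₁, hx₁, y₁, hy₁, t₁, ht₁, hle, fun x hx y hy t ht hxy =>
    hmax (a := (x, y, t)) ⟨⟨hx, hy, ht⟩, hxy⟩⟩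

theorem lt_of_twoPointGap_pos (hk : 0 ≤ k) (hr : 0 ≤ r) (ht : t₀ ≤ t) (hxy : x ≤ y)
    (hgap : 0 < twoPointGap A k r x₀ t₀ u x y t) : u x t < u y t := by
  by_contra! hu
  have hbarrier := expBarrier_nonpos (A := A) hk (sub_nonneg.2 ht) (sub_nonpos.2 hu)
  have hquad : 0 ≤ ((x - x₀) ^ 2 + (y - x₀) ^ 2) / (4 * r) := by positivity
  rw [twoPointGap] at hgap
  linarith

theorem mem_ball_of_twoPointGap_pos (hr : 0 < r) (hxy : x ≤ y)
    (hprofile : expProfile A k (u y t - u x t) (t - t₀) ≤ r / 4)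
    (hgap : 0 < twoPointGap A k r x₀ t₀ u x y t) : x ∈ ball x₀ r ∧ y ∈ ball x₀ r := by
  have hbarrier := expBarrier_lt_expProfile A k (u y t - u x t) (t - t₀)
  rw [twoPointGap] at hgap
  have hquad : ((x - x₀) ^ 2 + (y - x₀) ^ 2) / (4 * r) < r / 4 := by linarith
  rw [div_lt_iff₀ (by positivity)] at hquad
  simp only [mem_ball_iff_norm, Real.norm_eq_abs]
  exact ⟨abs_lt_of_sq_lt_sq (by linarith [sq_nonneg (y - x₀)]) hr.le,
    abs_lt_of_sq_lt_sq (by linarith [sq_nonneg (x - x₀)]) hr.le⟩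

theorem twoPointGap_nonpos_of_lipschitz {M L : ℝ} (hk : 0 ≤ k) (hr : 0 ≤ r) (ht : t₀ ≤ t)
    (hxy : x ≤ y) (hosc : u y t - u x t ≤ M) (hlip : u y t - u x t ≤ L * (y - x))
    (hsmall : k / (t - t₀) * expProfile A k M (t - t₀) * L ≤ 1) :
    twoPointGap A k r x₀ t₀ u x y t ≤ 0 := by
  by_contra! hgap
  have hw : 0 ≤ u y t - u x t := (sub_pos.2 (lt_of_twoPointGap_pos hk hr ht hxy hgap)).le
  have hτ : 0 ≤ t - t₀ := sub_nonneg.2 ht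
  have hM := expProfile_pos A k M (t - t₀)
  have hbarrier : expBarrier A k (u y t - u x t) (t - t₀) ≤ y - x := calc
    _ ≤ k / (t - t₀) * expProfile A k (u y t - u x t) (t - t₀) * (u y t - u x t) :=
      expBarrier_le_deriv_mul A k _ _
    _ ≤ k / (t - t₀) * expProfile A k M (t - t₀) * (L * (y - x)) := by
      gcongr
      exact expProfile_le_expProfile hk hτ hosc
    _ = k / (t - t₀) * expProfile A k M (t - t₀) * L * (y - x) := by ring
    _ ≤ y - x := mul_le_of_le_one_left (sub_nonneg.2 hxy) hsmall
  have hquad : 0 ≤ ((x - x₀) ^ 2 + (y - x₀) ^ 2) / (4 * r) := by positivity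
  rw [twoPointGap] at hgap
  linarith

end TwoPointGap

/-- `u` is a classical solution on `I × J` of `u_t = b u_xx` with `u_t, u_x, u_xx` given by
`ut, ux, uxx`, and `b u_x² ≥ A` wherever `|u_x| ≥ P`. The function `b` stands for the coefficient
`a (u_x, u, x, t)` evaluated along the solution. The time derivative is taken within `J`, so that it
is one-sided at an end of the time interval. -/
structure IsCoerciveSolutionOn (A P : ℝ) (b u ut ux uxx : ℝ → ℝ → ℝ) (I J : Set ℝ) : Prop where
  hasDerivWithinAt_time : ∀ x ∈ I, ∀ t ∈ J, HasDerivWithinAt (fun s => u x s) (ut x t) J t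
  hasDerivAt_space : ∀ x ∈ I, ∀ t ∈ J, HasDerivAt (fun y => u y t) (ux x t) x
  hasDerivAt_space_space : ∀ x ∈ I, ∀ t ∈ J, HasDerivAt (fun y => ux y t) (uxx x t) x
  equation : ∀ x ∈ I, ∀ t ∈ J, ut x t = b x t * uxx x t
  coercive : ∀ x ∈ I, ∀ t ∈ J, P ≤ |ux x t| → A ≤ b x t * ux x t ^ 2

namespace IsCoerciveSolutionOn

variable {A P : ℝ} {b u ut ux uxx : ℝ → ℝ → ℝ} {I J : Set ℝ}

theorem mono {I' J' : Set ℝ} (h : IsCoerciveSolutionOn A P b u ut ux uxx I J) (hI : I' ⊆ I)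
    (hJ : J' ⊆ J) : IsCoerciveSolutionOn A P b u ut ux uxx I' J' where
  hasDerivWithinAt_time x hx t ht := (h.hasDerivWithinAt_time x (hI hx) t (hJ ht)).mono hJ
  hasDerivAt_space x hx t ht := h.hasDerivAt_space x (hI hx) t (hJ ht)
  hasDerivAt_space_space x hx t ht := h.hasDerivAt_space_space x (hI hx) t (hJ ht)
  equation x hx t ht := h.equation x (hI hx) t (hJ ht)
  coercive x hx t ht := h.coercive x (hI hx) t (hJ ht)

theorem neg (h : IsCoerciveSolutionOn A P b u ut ux uxx I J) :
    IsCoerciveSolutionOn A P b (-u) (-ut) (-ux) (-uxx) I J where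
  hasDerivWithinAt_time x hx t ht := (h.hasDerivWithinAt_time x hx t ht).neg
  hasDerivAt_space x hx t ht := (h.hasDerivAt_space x hx t ht).neg
  hasDerivAt_space_space x hx t ht := (h.hasDerivAt_space_space x hx t ht).neg
  equation x hx t ht := by simp [h.equation x hx t ht]
  coercive x hx t ht := by simpa using h.coercive x hx t ht

section Regularity

variable {L : ℝ≥0} (h : IsCoerciveSolutionOn A P b u ut ux uxx I J) (hI : Convex ℝ I)
  (hL : ∀ x ∈ I, ∀ t ∈ J, |ux x t| ≤ L)
include h hI hL

theorem lipschitzOnWith_space {t : ℝ} (ht : t ∈ J) : LipschitzOnWith L (fun x => u x t) I :=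
  hI.lipschitzOnWith_of_nnnorm_hasDerivWithin_le
    (fun x hx => (h.hasDerivAt_space x hx t ht).hasDerivWithinAt) fun x hx => hL x hx t ht

theorem continuousOn_uncurry : ContinuousOn (fun z : ℝ × ℝ => u z.1 z.2) (I ×ˢ J) :=
  continuousOn_prod_of_continuousOn_lipschitzOnWith _ L
    (fun x hx t ht => (h.hasDerivWithinAt_time x hx t ht).continuousWithinAt)
    fun _ ht => h.lipschitzOnWith_space hI hL ht

end Regularity

section Touching

variable {k r x₀ t₀ s t x y : ℝ}

theorem deriv_profile_mul_time_deriv_le {c σ τ : ℝ} (hA : 0 < A) (hk : 0 < k) (hτ : 0 < τ)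
    (h : IsCoerciveSolutionOn A P b u ut ux uxx (ball x₀ r) J) (hx : x ∈ ball x₀ r) (ht : t ∈ J)
    (hsmall : IsSmallProfile A k P r (u x t + c) τ) (hσ : |σ| = 1)
    (hmax : IsLocalMax
      (fun z => expProfile A k (u z t + c) τ - (σ * z + (z - x₀) ^ 2 / (4 * r))) x) :
    k / τ * expProfile A k (u x t + c) τ * ut x t ≤
      -(A / 2 * ((k / τ) ^ 2 * expProfile A k (u x t + c) τ)) := by
  have hr : 0 < r := pos_of_mem_ball hx
  obtain ⟨hfirst, hsecond⟩ := expProfile_sub_quadratic_conditions_of_isLocalMax hr.ne'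
    ((isOpen_ball.eventually_mem hx).mono fun z hz => h.hasDerivAt_space z hz t ht)
    (h.hasDerivAt_space_space x hx t ht) hmax
  have hE := expProfile_pos A k (u x t + c) τ
  obtain ⟨hsmall, hsteep⟩ := hsmall
  generalize expProfile A k (u x t + c) τ = E at *
  have hslope : 1 / 2 ≤ |k / τ * E * ux x t| := by
    rw [hfirst]
    exact half_le_abs_add_div_of_mem_ball hσ hx
  have hp : P ≤ |ux x t| := by
    rw [abs_mul, abs_of_pos (by positivity)] at hslope
    refine le_of_mul_le_mul_left ?_ (by positivity : 0 < k / τ * E)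
    linarith
  have hconvex : 2 * (1 / (2 * r)) ≤ k / τ * (k / τ * E) * ux x t ^ 2 := by
    have hsq : (1 / 2) ^ 2 ≤ (k / τ * E * ux x t) ^ 2 := by
      rw [← sq_abs (k / τ * E * ux x t)]
      gcongr
    have : k / τ * (k / τ * E) * ux x t ^ 2 * E ≤ k / τ * (k / τ * E) * ux x t ^ 2 * (r / 4) := by
      gcongr
    rw [mul_one_div, div_le_iff₀ (by positivity)]
    linarith
  have := mul_mul_le_of_coercive hA (by positivity) (h.coercive x hx t ht hp) hsecond hconvex
  rw [h.equation x hx t ht]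
  linear_combination this

theorem not_isMaxOn_twoPointGap (hA : 0 < A) (hk : 0 < k)
    (h : IsCoerciveSolutionOn A P b u ut ux uxx (ball x₀ r) (Icc s t)) (hs : t₀ < s) (hst : s < t)
    (hx : x ∈ ball x₀ r) (hy : y ∈ ball x₀ r) (hu : u x t ≤ u y t)
    (hsmall : IsSmallProfile A k P r (u y t - u x t) (t - t₀))
    (hmax_x : IsLocalMax (fun z => twoPointGap A k r x₀ t₀ u z y t) x)
    (hmax_y : IsLocalMax (fun z => twoPointGap A k r x₀ t₀ u x z t) y) :
    ¬ IsMaxOn (fun τ => twoPointGap A k r x₀ t₀ u x y τ) (Icc s t) t := by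
  intro hmax_t
  have hτ : 0 < t - t₀ := sub_pos.2 (hs.trans hst)
  have ht : t ∈ Icc s t := right_mem_Icc.2 hst.le
  have hdiff_y := deriv_profile_mul_time_deriv_le (c := -u x t) (σ := 1) hA hk hτ h hy ht
    (by simpa only [← sub_eq_add_neg]) (by simp) (by
      filter_upwards [hmax_y] with z hz
      simp only [twoPointGap, expBarrier, ← sub_eq_add_neg, add_div] at hz ⊢
      linarith)
  have hdiff_x := deriv_profile_mul_time_deriv_le (c := u y t) (σ := -1) hA hk hτ h.neg hx ht
    (by simpa only [Pi.neg_apply, neg_add_eq_sub]) (by simp) (by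
      filter_upwards [hmax_x] with z hz
      simp only [twoPointGap, expBarrier, Pi.neg_apply, neg_add_eq_sub, add_div] at hz ⊢
      linarith)
  simp only [← sub_eq_add_neg] at hdiff_y
  simp only [Pi.neg_apply, neg_add_eq_sub] at hdiff_x
  have htime := mul_nonpos_of_isMaxOn_of_segment_subset hmax_t
    (((hasDerivWithinAt_expProfile_time ((h.hasDerivWithinAt_time y hy t ht).sub
      (h.hasDerivWithinAt_time x hx t ht)) hτ.ne').sub
        (hasDerivWithinAt_expProfile_time (hasDerivWithinAt_const t (Icc s t) 0) hτ.ne')).sub_const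
          (y - x + ((x - x₀) ^ 2 + (y - x₀) ^ 2) / (4 * r)))
    (by rw [segment_symm, segment_eq_Icc hst.le])
  have hsub := expBarrier_strict_subsolution hA hk hτ.ne' (sub_nonneg.2 hu)
  have hderiv := nonneg_of_mul_nonpos_right htime (sub_neg.2 hst)
  simp only [Pi.sub_apply, mul_zero] at hderiv
  linarith

end Touching
section Comparison

variable {M k r x₀ t₀ t₁ x y t : ℝ}

theorem twoPointGap_nonpos_of_initial {s : ℝ} {L : ℝ≥0} (hA : 0 < A) (hP : 0 ≤ P) (hk : 0 < k)
    (hr : 0 < r) (h : IsCoerciveSolutionOn A P b u ut ux uxx (closedBall x₀ r) (Icc s t₁))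
    (hs : t₀ < s) (hL : ∀ x ∈ closedBall x₀ r, ∀ t ∈ Icc s t₁, |ux x t| ≤ L)
    (hosc : ∀ t ∈ Icc s t₁, ∀ x ∈ closedBall x₀ r, ∀ y ∈ closedBall x₀ r, u y t - u x t ≤ M)
    (hsmall : ∀ t ∈ Icc s t₁, IsSmallProfile A k P r M (t - t₀))
    (hinit : k / (s - t₀) * expProfile A k M (s - t₀) * L ≤ 1) (ht : t ∈ Icc s t₁)
    (hx : x ∈ closedBall x₀ r) (hy : y ∈ closedBall x₀ r) (hxy : x ≤ y) :
    twoPointGap A k r x₀ t₀ u x y t ≤ 0 := by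
  have hconvex := convex_closedBall x₀ r
  obtain ⟨x₁, hx₁, y₁, hy₁, τ, hτ, hle, hmax⟩ := exists_forall_twoPointGap_le (A := A) (k := k)
    (r := r) (x₀ := x₀) (isCompact_closedBall x₀ r) isCompact_Icc
    (h.continuousOn_uncurry hconvex hL) (fun t ht => (hs.trans_le ht.1).ne') ⟨x, hx⟩ ⟨t, ht⟩
  by_contra! hpos
  have hgap := hpos.trans_le (hmax x hx y hy t ht hxy)
  have ht₀ : t₀ < τ := hs.trans_le hτ.1
  have hu := lt_of_twoPointGap_pos hk.le hr.le ht₀.le hle hgap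
  have hlt : x₁ < y₁ := hle.lt_of_ne fun heq => hu.ne (by rw [heq])
  have hsmall₁ := (hsmall τ hτ).mono hk.le (sub_pos.2 ht₀).le hP (hosc τ hτ x₁ hx₁ y₁ hy₁)
  obtain ⟨hx₁', hy₁'⟩ := mem_ball_of_twoPointGap_pos hr hle hsmall₁.profile_le hgap
  have hsτ : s < τ := hτ.1.lt_of_ne fun heq => by
    subst heq
    have hlip := (h.lipschitzOnWith_space hconvex hL hτ).dist_le_mul y₁ hy₁ x₁ hx₁
    rw [Real.dist_eq, Real.dist_eq, abs_of_pos (sub_pos.2 hu), abs_of_pos (sub_pos.2 hlt)] at hlip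
    exact hgap.not_ge (twoPointGap_nonpos_of_lipschitz hk.le hr.le ht₀.le hle
      (hosc _ hτ x₁ hx₁ y₁ hy₁) hlip hinit)
  refine not_isMaxOn_twoPointGap hA hk
    (h.mono ball_subset_closedBall (Icc_subset_Icc_right hτ.2)) hs hsτ hx₁' hy₁' hu.le hsmall₁
    ?_ ?_ fun t' ht' => hmax x₁ hx₁ y₁ hy₁ t' ⟨ht'.1, ht'.2.trans hτ.2⟩ hle
  · filter_upwards [isOpen_ball.mem_nhds hx₁', gt_mem_nhds hlt] with z hz hzy
      using hmax z (ball_subset_closedBall hz) y₁ hy₁ τ hτ hzy.le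
  · filter_upwards [isOpen_ball.mem_nhds hy₁', lt_mem_nhds hlt] with z hz hxz
      using hmax x₁ hx₁ z (ball_subset_closedBall hz) τ hτ hxz.le

section ArbitraryInitialGradient

variable (hA : 0 < A) (hP : 0 ≤ P) (hk : 0 < k) (hM : M < A * k) (hr : 0 < r) (ht : t₀ < t₁)
  (h : IsCoerciveSolutionOn A P b u ut ux uxx (closedBall x₀ r) (Icc t₀ t₁))
  (hcont : ContinuousOn (fun z : ℝ × ℝ => ux z.1 z.2) (closedBall x₀ r ×ˢ Icc t₀ t₁))
  (hosc : ∀ t ∈ Icc t₀ t₁, ∀ x ∈ closedBall x₀ r, ∀ y ∈ closedBall x₀ r, u y t - u x t ≤ M)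
  (hsmall : ∀ τ ∈ Ioc 0 (t₁ - t₀), IsSmallProfile A k P r M τ)
include hA hP hk hM hr ht h hcont hosc hsmall

theorem twoPointGap_nonpos (hx : x ∈ closedBall x₀ r) (hy : y ∈ closedBall x₀ r) (hxy : x ≤ y) :
    twoPointGap A k r x₀ t₀ u x y t₁ ≤ 0 := by
  obtain ⟨L, hL⟩ := ((isCompact_closedBall x₀ r).prod isCompact_Icc).exists_bound_of_continuousOn
    hcont
  obtain ⟨τ, hinit, hτ⟩ := ((eventually_deriv_expProfile_mul_le_one L.toNNReal hk hM).and
    (Ioc_mem_nhdsGT (sub_pos.2 ht))).exists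
  have hsub : Icc (t₀ + τ) t₁ ⊆ Icc t₀ t₁ := Icc_subset_Icc_left (by linarith [hτ.1])
  exact twoPointGap_nonpos_of_initial hA hP hk hr (h.mono subset_rfl hsub)
    (lt_add_of_pos_right t₀ hτ.1)
    (fun x hx t ht => (hL (x, t) ⟨hx, hsub ht⟩).trans L.le_coe_toNNReal)
    (fun t ht => hosc t (hsub ht))
    (fun t ht => hsmall _ ⟨by linarith [ht.1, hτ.1], by linarith [ht.2]⟩)
    (by rwa [add_sub_cancel_left]) ⟨by linarith [hτ.2], le_rfl⟩ hx hy hxy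

theorem deriv_space_le : ux x₀ t₁ ≤ (t₁ - t₀) / k * Real.exp (A * k ^ 2 / (t₁ - t₀)) := by
  have hx₀ : x₀ ∈ closedBall x₀ r := mem_closedBall_self hr.le
  have hsub : Icc x₀ (x₀ + r) ⊆ closedBall x₀ r := by
    rw [Real.closedBall_eq_Icc]
    exact Icc_subset_Icc_left (by linarith)
  have hmax : IsMaxOn (fun y => twoPointGap A k r x₀ t₀ u x₀ y t₁) (Icc x₀ (x₀ + r)) x₀ :=
    fun y hy => (twoPointGap_nonpos hA hP hk hM hr ht h hcont hosc hsmall hx₀ (hsub hy)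
      hy.1).trans_eq (by simp [twoPointGap, expBarrier])
  have hbarrier := (hasDerivAt_expProfile A k (u x₀ t₁ - u x₀ t₁) (t₁ - t₀)).comp x₀
    ((h.hasDerivAt_space x₀ hx₀ t₁ ⟨ht.le, le_rfl⟩).sub_const (u x₀ t₁))
  have hquad := (((hasDerivAt_id x₀).sub_const x₀).pow 2).const_add ((x₀ - x₀) ^ 2)
  have hderiv := mul_nonpos_of_isMaxOn_of_segment_subset hmax
    ((hbarrier.sub_const (expProfile A k 0 (t₁ - t₀))).sub
      (((hasDerivAt_id x₀).sub_const x₀).add (hquad.div_const (4 * r)))).hasDerivWithinAt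
    (segment_eq_Icc (by linarith : x₀ ≤ x₀ + r)).subset
  have hslope : k / (t₁ - t₀) * expProfile A k 0 (t₁ - t₀) * ux x₀ t₁ ≤ 1 := by
    have := nonpos_of_mul_nonpos_right hderiv (by linarith)
    simp only [id, sub_self] at this
    norm_num at this
    exact this
  have hτ : 0 < t₁ - t₀ := sub_pos.2 ht
  have hprofile : expProfile A k 0 (t₁ - t₀) = (Real.exp (A * k ^ 2 / (t₁ - t₀)))⁻¹ := by
    rw [expProfile, ← Real.exp_neg]
    congr 1
    ring
  rw [hprofile] at hslope
  calc ux x₀ t₁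
      = (t₁ - t₀) / k * Real.exp (A * k ^ 2 / (t₁ - t₀)) *
          (k / (t₁ - t₀) * (Real.exp (A * k ^ 2 / (t₁ - t₀)))⁻¹ * ux x₀ t₁) := by field_simp
    _ ≤ _ := mul_le_of_le_one_right (by positivity) hslope

theorem abs_deriv_space_le :
    |ux x₀ t₁| ≤ (t₁ - t₀) / k * Real.exp (A * k ^ 2 / (t₁ - t₀)) :=
  abs_le'.2 ⟨deriv_space_le hA hP hk hM hr ht h hcont hosc hsmall,
    deriv_space_le hA hP hk hM hr ht h.neg hcont.neg
      (fun t ht x hx y hy => by simpa [neg_add_eq_sub] using hosc t ht y hy x hx) hsmall⟩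

end ArbitraryInitialGradient

end Comparison

end IsCoerciveSolutionOn

theorem interior_gradient_estimate_one_dim_general {M A P d : ℝ} (hM : 0 < M) (hA : 0 < A)
    (hP : 0 ≤ P) (hd : 0 < d) :
    ∃ T' > 0, ∀ (Ω : Set ℝ) (T : ℝ) (b u ut ux uxx : ℝ → ℝ → ℝ),
      IsCoerciveSolutionOn A P b u ut ux uxx Ω (Ioc 0 T) →
      ContinuousOn (fun z : ℝ × ℝ => ux z.1 z.2) (Ω ×ˢ Ioc 0 T) →
      (∀ t ∈ Ioc 0 T, ∀ x ∈ Ω, ∀ y ∈ Ω, u y t - u x t ≤ M) →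
      ∀ x, ball x d ⊆ Ω → ∀ t ∈ Ioc 0 (min T T'),
        |ux x t| ≤ A / (4 * M) * t * Real.exp (8 * M ^ 2 / A / t) := by
  have hk : 0 < 2 * M / A := by positivity
  have hMk : M < A * (2 * M / A) := by
    rw [mul_div_cancel₀ _ hA.ne']
    linarith
  obtain ⟨T', hT', hsmall⟩ := mem_nhdsGT_iff_exists_Ioc_subset.1
    (eventually_isSmallProfile P (half_pos hd) hk hMk)
  refine ⟨T', hT', fun Ω T b u ut ux uxx h hcont hosc x hx t ⟨ht, htT⟩ => ?_⟩
  obtain ⟨htT, htT'⟩ := le_min_iff.1 htT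
  have hI : closedBall x (d / 2) ⊆ Ω := (closedBall_subset_ball (half_lt_self hd)).trans hx
  have hJ : Icc (t / 2) t ⊆ Ioc 0 T := fun s hs => ⟨(half_pos ht).trans_le hs.1, hs.2.trans htT⟩
  refine (IsCoerciveSolutionOn.abs_deriv_space_le hA hP hk hMk (half_pos hd) (half_lt_self ht)
    (h.mono hI hJ) (hcont.mono (prod_mono hI hJ))
    (fun s hs y hy z hz => hosc s (hJ hs) y (hI hy) z (hI hz))
    fun τ hτ => hsmall ⟨hτ.1, by linarith [hτ.2]⟩).trans_eq ?_
  rw [sub_half]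
  congr 2 <;> field_simp <;> ring

theorem le_sqrt_mul_one_add {t : ℝ} (ht : 0 ≤ t) : t ≤ √t * (1 + t) := by
  have hsqrt : √t ≤ 1 + t := Real.sqrt_le_iff.2 ⟨by positivity, by nlinarith⟩
  calc t = √t * √t := (Real.mul_self_sqrt ht).symm
    _ ≤ √t * (1 + t) := by gcongr

/-- Interior short-time gradient estimate, independent of the
initial gradient, for solutions of `u_t = a(u_x,u,x,t) u_{xx}` on an open interval,
under the degeneracy control `a p² ≥ A` for `|p| ≥ P`. -/
theorem interior_gradient_estimate_one_dim :
    ∀ M A P d : ℝ, 0 < M → 0 < A → 0 < P → 0 < d →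
    ∃ T' C₁ C₂ : ℝ, 0 < T' ∧ 0 < C₁ ∧ 0 < C₂ ∧
      ∀ (Ω : Set ℝ), IsOpen Ω → Convex ℝ Ω →
      ∀ (T : ℝ), 0 < T →
      ∀ (a : ℝ → ℝ → ℝ → ℝ → ℝ) (u ut ux uxx : ℝ → ℝ → ℝ),
      ContinuousOn (fun z : ℝ × ℝ × ℝ × ℝ => a z.1 z.2.1 z.2.2.1 z.2.2.2)
        (Set.univ ×ˢ Set.univ ×ˢ Ω ×ˢ Set.Icc 0 T) →
      (∀ p q : ℝ, ∀ x ∈ Ω, ∀ t ∈ Set.Icc (0:ℝ) T, 0 < a p q x t) →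
      (∀ p q : ℝ, ∀ x ∈ Ω, ∀ t ∈ Set.Icc (0:ℝ) T, P ≤ |p| → A ≤ a p q x t * p ^ 2) →
      (∀ x ∈ Ω, ∀ t ∈ Set.Ioc (0:ℝ) T,
        HasDerivWithinAt (fun s => u x s) (ut x t) (Set.Ioc 0 T) t) →
      (∀ x ∈ Ω, ∀ t ∈ Set.Ioc (0:ℝ) T, HasDerivAt (fun y => u y t) (ux x t) x) →
      (∀ x ∈ Ω, ∀ t ∈ Set.Ioc (0:ℝ) T, HasDerivAt (fun y => ux y t) (uxx x t) x) →
      ContinuousOn (fun z : ℝ × ℝ => ut z.1 z.2) (Ω ×ˢ Set.Ioc 0 T) →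
      ContinuousOn (fun z : ℝ × ℝ => ux z.1 z.2) (Ω ×ˢ Set.Ioc 0 T) →
      ContinuousOn (fun z : ℝ × ℝ => uxx z.1 z.2) (Ω ×ˢ Set.Ioc 0 T) →
      (∀ x ∈ Ω, ∀ t ∈ Set.Ioc (0:ℝ) T,
        ut x t = a (ux x t) (u x t) x t * uxx x t) →
      (∀ x ∈ Ω, ∀ x' ∈ Ω, ∀ t ∈ Set.Icc (0:ℝ) T, ∀ t' ∈ Set.Icc (0:ℝ) T,
        u x t - u x' t' ≤ M) →
      ∀ x ∈ Ω, (∀ y : ℝ, y ∉ Ω → d ≤ |x - y|) →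
      ∀ t ∈ Set.Ioc (0:ℝ) (min T T'),
        |ux x t| ≤ C₁ * Real.sqrt t * (1 + t) * Real.exp (C₂ / t) := by
  intro M A P d hM hA hP hd
  obtain ⟨T', hT', h⟩ := interior_gradient_estimate_one_dim_general hM hA hP.le hd
  refine ⟨T', A / (4 * M), 8 * M ^ 2 / A, hT', by positivity, by positivity, ?_⟩
  intro Ω _ _ T _ a u ut ux uxx _ _ hcoercive hut hux huxx _ hcont _ heq hosc x _ hdist t ht
  have hsol : IsCoerciveSolutionOn A P (fun x t => a (ux x t) (u x t) x t) u ut ux uxx Ω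
      (Ioc 0 T) :=
    ⟨hut, hux, huxx, heq, fun x hx t ht => hcoercive _ _ x hx t (Ioc_subset_Icc_self ht)⟩
  have hball : ball x d ⊆ Ω := fun y hy => by
    by_contra hyΩ
    exact (mem_ball'.1 hy).not_ge (hdist y hyΩ)
  calc |ux x t| ≤ A / (4 * M) * t * Real.exp (8 * M ^ 2 / A / t) :=
        h Ω T _ u ut ux uxx hsol hcont (fun t ht x hx y hy => hosc y hy x hx
          t (Ioc_subset_Icc_self ht) t (Ioc_subset_Icc_self ht)) x hball t ht
    _ ≤ A / (4 * M) * (√t * (1 + t)) * Real.exp (8 * M ^ 2 / A / t) := by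
        gcongr
        exact le_sqrt_mul_one_add ht.1.le
    _ = A / (4 * M) * √t * (1 + t) * Real.exp (8 * M ^ 2 / A / t) := by ring
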